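/- Let F : S → G(S) be a Markov chain on a measurable space S and let A, B ⊆ S be measurable. There exists a generalised Streett supermartingale for (F, A, B) if and only if F is positively (A,B)-recurrent from every initial state, i.e., E_{s₀}[step_{s₀}^{(A,B)}] < ∞ for all s₀ ∈ S. -/

import Mathlib

open MeasureTheory ProbabilityTheory Set
open scoped ENNReal NNReal

variable {S : Type*} [MeasurableSpace S]

/-- Prepend an initial state to a trace. -/
def prep (s₀ : S) (ω : ℕ → S) : ℕ → S := fun n => Nat.rec s₀ (fun k _ => ω k) n

/-- `stepCount A B s₀ ω` is the number of indices `i` with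
`0 ≤ i < min {j | s_j ∈ B}` and `s_i ∈ A`, where `s₀ s₁ s₂ ⋯` is the trace `ω`
prefixed with the initial state `s₀`. -/
noncomputable def stepCount (A B : Set S) (s₀ : S) (ω : ℕ → S) : ℕ∞ :=
  {i : ℕ | prep s₀ ω i ∈ A ∧ ∀ j ≤ i, prep s₀ ω j ∉ B}.encard

/-- The next-time operator: `(𝕏 g)(s) = ∫ g dF(s)`. -/
noncomputable def nextTime (F : Kernel S S) (g : S → ℝ≥0∞) : S → ℝ≥0∞ :=
  fun s => ∫⁻ y, g y ∂(F s)

/-- A generalised Streett supermartingale (GSSM) for `(F, A, B)`: a measurable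
`[0,∞)`-valued function `r` with `(𝕏 r)(x) ≤ r(x) − 1` on `A ∖ B` and
`(𝕏 r)(x) ≤ r(x)` outside `A ∪ B`. -/
def IsGSSM (F : Kernel S S) (A B : Set S) (r : S → ℝ≥0∞) : Prop :=
  Measurable r ∧ (∀ x, r x ≠ ⊤) ∧
    (∀ x ∈ A \ B, nextTime F r x + 1 ≤ r x) ∧
    (∀ x ∉ A ∪ B, nextTime F r x ≤ r x)

/-!
Let `K` be the kernel `F` killed on `B`. The probability that index `i` is counted from `s` is
`(𝕏_K)^i 1_{A ∖ B} (s)`, so the expected number of steps is the Neumann series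
`∑ i, (𝕏_K)^i 1_{A ∖ B}`. This is the least solution `r` of `1_{A ∖ B} + 𝕏_K r ≤ r`, and the finite
measurable solutions of that inequality are exactly the generalised Streett supermartingales.
-/

section Potential

variable (K : Kernel S S)

/-- The potential `∑ n, 𝕏ⁿ u` of a charge `u` under a kernel that need not be Markov: the total
charge collected along the chain. -/
noncomputable def potential (u : S → ℝ≥0∞) : S → ℝ≥0∞ :=
  fun s => ∑' n, (nextTime K)^[n] u s

lemma monotone_nextTime : Monotone (nextTime K) :=
  fun _ _ h _ => lintegral_mono h

variable {K} {u : S → ℝ≥0∞}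

lemma measurable_nextTime_iterate (hu : Measurable u) (n : ℕ) :
    Measurable ((nextTime K)^[n] u) := by
  induction n with
  | zero => exact hu
  | succ n ih =>
    rw [Function.iterate_succ_apply']
    exact ih.lintegral_kernel

lemma measurable_potential (hu : Measurable u) : Measurable (potential K u) :=
  .tsum fun n => measurable_nextTime_iterate hu n

lemma add_nextTime_potential (hu : Measurable u) :
    u + nextTime K (potential K u) = potential K u := by
  ext s
  calc u s + nextTime K (potential K u) s
      = u s + ∑' n, nextTime K ((nextTime K)^[n] u) s :=
        congrArg (u s + ·) <|
          lintegral_tsum fun n => (measurable_nextTime_iterate hu n).aemeasurable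
    _ = potential K u s := by
        simp only [potential, tsum_eq_zero_add' ENNReal.summable (f := fun n => _^[n] u s),
          Function.iterate_succ_apply', Function.iterate_zero_apply]

lemma sum_nextTime_iterate_succ (hu : Measurable u) (n : ℕ) :
    ∑ i ∈ Finset.range (n + 1), (nextTime K)^[i] u =
      u + nextTime K (∑ i ∈ Finset.range n, (nextTime K)^[i] u) := by
  ext s
  simp only [Finset.sum_range_succ', Function.iterate_succ_apply', Function.iterate_zero_apply,
    Pi.add_apply, Finset.sum_apply, nextTime]
  rw [lintegral_finsetSum _ fun i _ => measurable_nextTime_iterate hu i, add_comm]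

lemma potential_le_of_add_nextTime_le (hu : Measurable u) {r : S → ℝ≥0∞}
    (hr : u + nextTime K r ≤ r) : potential K u ≤ r := by
  have sum_le (n : ℕ) : ∑ i ∈ Finset.range n, (nextTime K)^[i] u ≤ r := by
    induction n with
    | zero => exact fun _ => zero_le
    | succ n ih =>
      rw [sum_nextTime_iterate_succ hu]
      exact (add_le_add_right (monotone_nextTime K ih) u).trans hr
  intro s
  refine ENNReal.tsum_le_of_sum_range_le fun n => ?_
  simpa only [Finset.sum_apply] using sum_le n s

end Potential

section Killed

variable (F : Kernel S S) {A B : Set S} (hB : MeasurableSet B)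

open Classical in
/-- The chain `F` killed on `B`: its transition measure is zero at the states of `B`. -/
noncomputable def killedKernel : Kernel S S :=
  Kernel.piecewise hB 0 F

variable {F} {s : S}

lemma nextTime_killedKernel_of_mem (hs : s ∈ B) (g : S → ℝ≥0∞) :
    nextTime (killedKernel F hB) g s = 0 := by
  simp [nextTime, killedKernel, Kernel.piecewise_apply, hs]

lemma nextTime_killedKernel_of_notMem (hs : s ∉ B) (g : S → ℝ≥0∞) :
    nextTime (killedKernel F hB) g s = nextTime F g s := by
  simp [nextTime, killedKernel, Kernel.piecewise_apply, hs]

lemma isGSSM_iff_add_nextTime_killedKernel_le {r : S → ℝ≥0∞} :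
    IsGSSM F A B r ↔ Measurable r ∧ (∀ x, r x ≠ ⊤) ∧
      (A \ B).indicator 1 + nextTime (killedKernel F hB) r ≤ r := by
  refine and_congr_right fun _ => and_congr_right fun _ => ⟨?_, fun h => ⟨?_, ?_⟩⟩
  · rintro ⟨decrease, nonincrease⟩ x
    by_cases hxB : x ∈ B
    · simp [nextTime_killedKernel_of_mem hB hxB, hxB]
    by_cases hxA : x ∈ A
    · simpa [nextTime_killedKernel_of_notMem hB hxB, hxA, hxB, add_comm]
        using decrease x ⟨hxA, hxB⟩
    · simpa [nextTime_killedKernel_of_notMem hB hxB, hxA] using nonincrease x (by simp [hxA, hxB])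
  · intro x hx
    simpa [nextTime_killedKernel_of_notMem hB hx.2, hx.1, hx.2, add_comm] using h x
  · intro x hx
    rw [mem_union, not_or] at hx
    simpa [nextTime_killedKernel_of_notMem hB hx.2, hx.1] using h x

end Killed

section Trace

lemma measurable_prep_uncurry : Measurable fun p : S × (ℕ → S) => prep p.1 p.2 := by
  refine measurable_pi_lambda _ fun n => ?_
  cases n with
  | zero => exact measurable_fst
  | succ k => exact (measurable_pi_apply k).comp measurable_snd

lemma measurable_prep (s : S) : Measurable (prep s) :=
  measurable_prep_uncurry.comp measurable_prodMk_left

lemma measurable_map_prep (P : Kernel S (ℕ → S)) [IsSFiniteKernel P] :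
    Measurable fun s => (P s).map (prep s) := by
  have map_prep_eq (s : S) :
      (P s).map (prep s) = (Kernel.id ×ₖ P).map (fun p => prep p.1 p.2) s := by
    rw [Kernel.map_apply _ measurable_prep_uncurry, Kernel.prod_apply, Kernel.id_apply,
      Measure.dirac_prod, Measure.map_map measurable_prep_uncurry measurable_prodMk_left]
    rfl
  simpa only [map_prep_eq] using Kernel.measurable _

/-- `P s₀` is the law of the trace `s₁ s₂ ⋯` of the chain `F` started at `s₀`, characterised by its
first-step decomposition. -/
def IsTraceKernel (F : Kernel S S) (P : Kernel S (ℕ → S)) : Prop :=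
  ∀ s₀, P s₀ = (F s₀).bind fun s₁ => (P s₁).map (prep s₁)

lemma IsTraceKernel.measure_eq_nextTime {F : Kernel S S} {P : Kernel S (ℕ → S)}
    [IsSFiniteKernel P] (hP : IsTraceKernel F P) (s : S) {t : Set (ℕ → S)}
    (ht : MeasurableSet t) : P s t = nextTime F (fun y => P y (prep y ⁻¹' t)) s := by
  rw [hP s, Measure.bind_apply ht (measurable_map_prep P).aemeasurable]
  exact lintegral_congr fun y => Measure.map_apply (measurable_prep y) ht

end Trace

section StepEvent

variable {α : Type*} {A B : Set α} {s : α}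

/-- The event that index `i` contributes to `stepCount A B s`. -/
def stepEvent (A B : Set α) (s : α) (i : ℕ) : Set (ℕ → α) :=
  {ω | prep s ω i ∈ A ∧ ∀ j ≤ i, prep s ω j ∉ B}

lemma stepCount_eq_tsum_indicator (A B : Set α) (s : α) (ω : ℕ → α) :
    (stepCount A B s ω : ℝ≥0∞) = ∑' i, (stepEvent A B s i).indicator 1 ω := by
  rw [stepCount, ← ENNReal.tsum_set_one, tsum_subtype _ fun _ => (1 : ℝ≥0∞)]
  rfl

lemma stepEvent_of_mem (hs : s ∈ B) (i : ℕ) : stepEvent A B s i = ∅ :=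
  eq_empty_of_forall_notMem fun _ h => h.2 0 i.zero_le hs

lemma prep_preimage_stepEvent_succ (hs : s ∉ B) (y : α) (i : ℕ) :
    prep y ⁻¹' stepEvent A B s (i + 1) = stepEvent A B y i := by
  ext ω
  refine and_congr_right fun _ => ⟨fun h j hj => h (j + 1) (by lia), fun h j hj => ?_⟩
  cases j with
  | zero => exact hs
  | succ k => exact h k (by lia)

end StepEvent

section StepProbability

variable {A B : Set S} {s : S}

lemma measurableSet_stepEvent (hA : MeasurableSet A) (hB : MeasurableSet B) (s : S) (i : ℕ) :
    MeasurableSet (stepEvent A B s i) := by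
  have measurable_state (j : ℕ) : Measurable fun ω => prep s ω j :=
    (measurable_pi_apply j).comp (measurable_prep s)
  have stepEvent_eq : stepEvent A B s i =
      (prep s · i) ⁻¹' A ∩ ⋂ j ≤ i, (prep s · j) ⁻¹' Bᶜ := by
    ext ω
    simp [stepEvent]
  rw [stepEvent_eq]
  exact (measurable_state i hA).inter <|
    .iInter fun j => .iInter fun _ => measurable_state j hB.compl

lemma lintegral_stepCount (hA : MeasurableSet A) (hB : MeasurableSet B) (s : S)
    (μ : Measure (ℕ → S)) :
    ∫⁻ ω, (stepCount A B s ω : ℝ≥0∞) ∂μ = ∑' i, μ (stepEvent A B s i) := by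
  have measurableSet_event := measurableSet_stepEvent hA hB s
  simp_rw [stepCount_eq_tsum_indicator]
  rw [lintegral_tsum fun i => (measurable_one.indicator (measurableSet_event i)).aemeasurable]
  exact tsum_congr fun i => lintegral_indicator_one (measurableSet_event i)

lemma measure_stepEvent_zero (μ : Measure (ℕ → S)) [IsProbabilityMeasure μ] :
    μ (stepEvent A B s 0) = (A \ B).indicator 1 s := by
  by_cases hs : s ∈ A \ B
  · have : stepEvent A B s 0 = univ := by simp [stepEvent, prep, hs.1, hs.2]
    simp [this, indicator_of_mem hs]
  · have : stepEvent A B s 0 = ∅ :=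
      eq_empty_of_forall_notMem fun _ h => hs ⟨h.1, h.2 0 le_rfl⟩
    simp [this, indicator_of_notMem hs]

variable {F : Kernel S S} {P : Kernel S (ℕ → S)}

lemma IsTraceKernel.measure_stepEvent_succ [IsSFiniteKernel P] (hP : IsTraceKernel F P)
    (hA : MeasurableSet A) (hB : MeasurableSet B) (s : S) (i : ℕ) :
    P s (stepEvent A B s (i + 1)) =
      nextTime (killedKernel F hB) (fun y => P y (stepEvent A B y i)) s := by
  by_cases hs : s ∈ B
  · rw [stepEvent_of_mem hs, measure_empty, nextTime_killedKernel_of_mem hB hs]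
  · rw [hP.measure_eq_nextTime s (measurableSet_stepEvent hA hB s (i + 1)),
      nextTime_killedKernel_of_notMem hB hs]
    simp_rw [prep_preimage_stepEvent_succ hs]

lemma IsTraceKernel.measure_stepEvent_eq_nextTime_iterate [IsMarkovKernel P]
    (hP : IsTraceKernel F P) (hA : MeasurableSet A) (hB : MeasurableSet B) (i : ℕ) :
    (fun s => P s (stepEvent A B s i)) =
      (nextTime (killedKernel F hB))^[i] ((A \ B).indicator 1) := by
  induction i with
  | zero => exact funext fun s => measure_stepEvent_zero (P s)
  | succ i ih =>
    rw [Function.iterate_succ_apply', ← ih]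
    exact funext fun s => hP.measure_stepEvent_succ hA hB s i

lemma IsTraceKernel.lintegral_stepCount_eq_potential [IsMarkovKernel P]
    (hP : IsTraceKernel F P) (hA : MeasurableSet A) (hB : MeasurableSet B) (s : S) :
    ∫⁻ ω, (stepCount A B s ω : ℝ≥0∞) ∂(P s) =
      potential (killedKernel F hB) ((A \ B).indicator 1) s := by
  rw [lintegral_stepCount hA hB]
  exact tsum_congr fun i => congrFun (hP.measure_stepEvent_eq_nextTime_iterate hA hB i) s

end StepProbability

/-- There exists a generalised Streett supermartingale for `(F, A, B)` iff the
Markov chain is positively `(A,B)`-recurrent from every initial state. -/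
theorem exists_GSSM_iff_positive_recurrent
    (F : Kernel S S) [IsMarkovKernel F]
    (P : Kernel S (ℕ → S)) [IsMarkovKernel P]
    (hP : ∀ s₀ : S, (P s₀ : Measure (ℕ → S)) = (F s₀).bind fun s₁ => (P s₁).map (prep s₁))
    (A B : Set S) (hA : MeasurableSet A) (hB : MeasurableSet B) :
    (∃ r : S → ℝ≥0∞, IsGSSM F A B r) ↔
      (∀ s₀ : S, ∫⁻ ω, (stepCount A B s₀ ω : ℝ≥0∞) ∂(P s₀) < ⊤) := by
  have measurable_charge : Measurable ((A \ B).indicator (1 : S → ℝ≥0∞)) :=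
    measurable_one.indicator (hA.diff hB)
  have expectation_eq := IsTraceKernel.lintegral_stepCount_eq_potential hP hA hB
  simp_rw [expectation_eq, isGSSM_iff_add_nextTime_killedKernel_le hB]
  constructor
  · rintro ⟨r, -, r_ne_top, r_super⟩ s₀
    exact (potential_le_of_add_nextTime_le measurable_charge r_super s₀).trans_lt
      (r_ne_top s₀).lt_top
  · intro potential_lt_top
    exact ⟨_, measurable_potential measurable_charge, fun s => (potential_lt_top s).ne,
      (add_nextTime_potential measurable_charge).le⟩
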